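/- Let n ≥ 1, let σ ∈ Matrix (Fin n) (Fin n) ℂ be positive definite with Tr σ = 1, and let A, B ∈ Matrix (Fin n) (Fin n) ℂ be Hermitian with Tr A = Tr B = 0. Define H_σ(τ) := Re Tr[τ·(log τ − log σ)]. Then the second mixed derivative ∂_ε ∂_η |_{ε=η=0} H_σ(σ + ε·A + η·B) exists and equals ∫₀^∞ Re Tr[(s·I + σ)⁻¹ · A · (s·I + σ)⁻¹ · B] ds; i.e. the Hessian of the von Neumann relative entropy H_σ at its minimum σ, evaluated on traceless Hermitian directions A and B, is the BKM-tilde pairing ⟨A,B⟩_BKM~ := Re Tr[A · ∫₀^∞ (s·I+σ)⁻¹ B (s·I+σ)⁻¹ ds]. -/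

import Mathlib

open scoped ComplexOrder Matrix Topology

/-- Matrix logarithm of a positive definite (Hermitian) matrix, defined by applying the
real logarithm to the eigenvalues in a spectral decomposition. -/
noncomputable def mlog {n : ℕ} (ρ : Matrix (Fin n) (Fin n) ℂ) :
    Matrix (Fin n) (Fin n) ℂ :=
  if h : ρ.IsHermitian then
    (h.eigenvectorUnitary : Matrix (Fin n) (Fin n) ℂ) *
      Matrix.diagonal (fun i => ((Real.log (h.eigenvalues i) : ℝ) : ℂ)) *
      (h.eigenvectorUnitary : Matrix (Fin n) (Fin n) ℂ)ᴴ
  else 0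

/-- The von Neumann relative entropy `H_σ(τ) := Re Tr[τ (log τ − log σ)]`. -/
noncomputable def vonNeumannRelEnt {n : ℕ} (σ τ : Matrix (Fin n) (Fin n) ℂ) : ℝ :=
  ((τ * (mlog τ - mlog σ)).trace).re

/-!
Under the continuous functional calculus, the scalar identity
`log l = ∫₀^∞ ((s + 1)⁻¹ - (s + l)⁻¹) ds` becomes an integral formula for the logarithm of a
strictly positive element `a` of a C⋆-algebra. Differentiating under the integral sign gives
`D log(a)[x] = ∫₀^∞ (s + a)⁻¹ x (s + a)⁻¹ ds =: L_a x`. For a trace `T` the pairing `T (y (L_a x))`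
is symmetric, and `L_a a = 1`, so `T (b (L_b y)) = T y`: the derivative of
`b ↦ T (b (log b - log a))` in the direction `y` is therefore `T (y (log b - log a)) + T y`.
Differentiating this at `b = a` in the direction `x` leaves `T (y (L_a x))`.
-/

open MeasureTheory Set Filter
open scoped Ring

section Scalar

theorem integrableOn_Ioi_inv_add_sq {c : ℝ} (hc : 0 < c) :
    IntegrableOn (fun s : ℝ => (s + c)⁻¹ ^ 2) (Ioi 0) := by
  refine (integrableOn_add_rpow_Ioi_of_lt (a := -2) (m := c) (by norm_num)
    (neg_lt_zero.2 hc)).congr_fun (fun s (hs : 0 < s) => ?_) measurableSet_Ioi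
  simp only [Real.rpow_neg (add_pos hs hc).le, inv_pow, Real.rpow_two]

theorem abs_inv_add_sub_inv_add_le {c l m s : ℝ} (hc : 0 < c) (hl : c ≤ l) (hm : c ≤ m)
    (hs : 0 ≤ s) : |(s + l)⁻¹ - (s + m)⁻¹| ≤ |m - l| * (s + c)⁻¹ ^ 2 := by
  have hsl : 0 < s + l := by linarith
  have hsm : 0 < s + m := by linarith
  calc |(s + l)⁻¹ - (s + m)⁻¹| = |m - l| * ((s + l)⁻¹ * (s + m)⁻¹) := by
        rw [inv_sub_inv hsl.ne' hsm.ne', abs_div, abs_of_pos (mul_pos hsl hsm),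
          add_sub_add_left_eq_sub, div_eq_mul_inv, mul_inv]
    _ ≤ |m - l| * (s + c)⁻¹ ^ 2 := by
        rw [sq]
        gcongr

theorem integrableOn_Ioi_inv_add_sub_inv_add {l m : ℝ} (hl : 0 < l) (hm : 0 < m) :
    IntegrableOn (fun s : ℝ => (s + l)⁻¹ - (s + m)⁻¹) (Ioi 0) :=
  ((integrableOn_Ioi_inv_add_sq (lt_min hl hm)).const_mul |m - l|).mono'
    (by fun_prop)
    (ae_restrict_of_forall_mem measurableSet_Ioi fun _ hs =>
      abs_inv_add_sub_inv_add_le (lt_min hl hm) (min_le_left l m) (min_le_right l m) (le_of_lt hs))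

theorem tendsto_log_add_sub_log_add_atTop (l m : ℝ) :
    Tendsto (fun s : ℝ => Real.log (s + l) - Real.log (s + m)) atTop (𝓝 0) := by
  simpa using (Real.tendsto_log_comp_add_sub_log l).sub (Real.tendsto_log_comp_add_sub_log m)

theorem integral_Ioi_inv_add_sub_inv_add {l m : ℝ} (hl : 0 < l) (hm : 0 < m) :
    ∫ s in Ioi (0 : ℝ), ((s + l)⁻¹ - (s + m)⁻¹) = Real.log m - Real.log l := by
  have hderiv (s : ℝ) (hs : s ∈ Ici 0) :
      HasDerivAt (fun s => Real.log (s + l) - Real.log (s + m)) ((s + l)⁻¹ - (s + m)⁻¹) s := by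
    have hlog {r : ℝ} (hr : 0 < r) : HasDerivAt (fun s => Real.log (s + r)) (s + r)⁻¹ s :=
      (Real.hasDerivAt_log (add_pos_of_nonneg_of_pos hs hr).ne').comp_add_const s r
    exact (hlog hl).sub (hlog hm)
  rw [integral_Ioi_of_hasDerivAt_of_tendsto' hderiv (integrableOn_Ioi_inv_add_sub_inv_add hl hm)
    (tendsto_log_add_sub_log_add_atTop l m)]
  simp

theorem continuousOn_inv_add_one_sub_inv_add {S : Set ℝ} (hS : ∀ r ∈ S, 0 < r) :
    ContinuousOn (Function.uncurry fun s r : ℝ => (s + 1)⁻¹ - (s + r)⁻¹) (Ioi 0 ×ˢ S) := by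
  refine .sub (.inv₀ (by fun_prop) ?_) (.inv₀ (by fun_prop) ?_)
  · rintro ⟨s, r⟩ ⟨hs, -⟩
    exact (add_pos hs one_pos).ne'
  · rintro ⟨s, r⟩ ⟨hs, hr⟩
    exact (add_pos hs (hS r hr)).ne'

theorem exists_abs_inv_add_one_sub_inv_add_le {S : Set ℝ} (hSc : IsCompact S)
    (hS : ∀ r ∈ S, 0 < r) :
    ∃ g : ℝ → ℝ, IntegrableOn g (Ioi 0) ∧
      ∀ s ∈ Ioi (0 : ℝ), ∀ r ∈ S, |(s + 1)⁻¹ - (s + r)⁻¹| ≤ g s := by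
  obtain ⟨c, hc, hcS⟩ : ∃ c : ℝ, 0 < c ∧ ∀ r ∈ S, c ≤ r :=
    hSc.exists_forall_le' continuousOn_id hS
  obtain ⟨C, hC⟩ := hSc.exists_bound_of_continuousOn (f := fun r : ℝ => r - 1) (by fun_prop)
  have hc1 : 0 < min c 1 := lt_min hc one_pos
  refine ⟨fun s => C * (s + min c 1)⁻¹ ^ 2, (integrableOn_Ioi_inv_add_sq hc1).const_mul C,
    fun s hs r hr => ?_⟩
  calc |(s + 1)⁻¹ - (s + r)⁻¹| ≤ |r - 1| * (s + min c 1)⁻¹ ^ 2 :=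
        abs_inv_add_sub_inv_add_le hc1 (min_le_right c 1) ((min_le_left c 1).trans (hcS r hr))
          (le_of_lt hs)
    _ ≤ C * (s + min c 1)⁻¹ ^ 2 := mul_le_mul_of_nonneg_right (hC r hr) (by positivity)

end Scalar

/-- The inverse `(s + a)⁻¹`, that is, the resolvent of `-a` at `s`. It is `0` when `s + a` is not
invertible. -/
noncomputable def shiftedInv {𝒜 : Type*} [Ring 𝒜] [Algebra ℝ 𝒜] (a : 𝒜) (s : ℝ) : 𝒜 :=
  (algebraMap ℝ 𝒜 s + a)⁻¹ʳ

section NormedAlgebra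

variable {𝒜 : Type*} [NormedRing 𝒜] [NormedAlgebra ℝ 𝒜]

/-- The BKM superoperator `x ↦ ∫₀^∞ (s + a)⁻¹ x (s + a)⁻¹ ds`, a noncommutative version of
division by `a`. -/
noncomputable def bkmMap (a x : 𝒜) : 𝒜 :=
  ∫ s in Ioi (0 : ℝ), shiftedInv a s * x * shiftedInv a s

variable [HasSummableGeomSeries 𝒜] {a x : 𝒜} {s t : ℝ}

theorem continuousAt_shiftedInv (h : IsUnit (algebraMap ℝ 𝒜 s + a)) :
    ContinuousAt (shiftedInv a) s :=
  ContinuousAt.comp (f := fun s => algebraMap ℝ 𝒜 s + a)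
    (NormedRing.inverse_continuousAt h.unit) (by fun_prop)

theorem hasDerivAt_shiftedInv_add_smul (h : IsUnit (algebraMap ℝ 𝒜 s + (a + t • x))) :
    HasDerivAt (fun t : ℝ => shiftedInv (a + t • x) s)
      (-(shiftedInv (a + t • x) s * x * shiftedInv (a + t • x) s)) t := by
  have hline : HasDerivAt (fun t : ℝ => algebraMap ℝ 𝒜 s + (a + t • x)) x t := by
    simpa using (((hasDerivAt_id t).smul_const x).const_add a).const_add (algebraMap ℝ 𝒜 s)
  refine (HasFDerivAt.comp_hasDerivAt t
    (hasFDerivAt_ringInverse (𝕜 := ℝ) h.unit) hline).congr_deriv ?_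
  simp [shiftedInv, Ring.inverse_of_isUnit h]

end NormedAlgebra

section CStarAlgebra

variable {𝒜 : Type*} [CStarAlgebra 𝒜]

/-- The relative entropy `T (b (log b - log a))` of `b` with respect to `a`, for a functional `T`
playing the role of the trace. -/
noncomputable def traceRelEnt {E : Type*} [NormedAddCommGroup E] [NormedSpace ℝ E]
    (T : 𝒜 →L[ℝ] E) (a b : 𝒜) : E :=
  T (b * (CFC.log b - CFC.log a))

variable [PartialOrder 𝒜] [StarOrderedRing 𝒜] {a x : 𝒜} {c s : ℝ}

theorem exists_pos_algebraMap_le_of_isStrictlyPositive (ha : IsStrictlyPositive a) :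
    ∃ c : ℝ, 0 < c ∧ algebraMap ℝ 𝒜 c ≤ a := by
  nontriviality 𝒜 using exists_gt (0 : ℝ)
  exact (CFC.exists_pos_algebraMap_le_iff ha.isSelfAdjoint).2 fun _ => ha.spectrum_pos

theorem isStrictlyPositive_of_algebraMap_le (hc : 0 < c) (hca : algebraMap ℝ 𝒜 c ≤ a) :
    IsStrictlyPositive a :=
  (isStrictlyPositive_algebraMap hc).of_le hca

theorem isUnit_algebraMap_add (ha : IsStrictlyPositive a) (hs : 0 ≤ s) :
    IsUnit (algebraMap ℝ 𝒜 s + a) :=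
  (IsStrictlyPositive.nonneg_add (algebraMap_nonneg 𝒜 hs) ha).isUnit

theorem shiftedInv_eq_cfc (ha : IsStrictlyPositive a) (hs : 0 ≤ s) :
    shiftedInv a s = cfc (fun r : ℝ => (s + r)⁻¹) a := by
  have hpos (r : ℝ) (hr : r ∈ spectrum ℝ a) : s + r ≠ 0 :=
    (add_pos_of_nonneg_of_pos hs (ha.spectrum_pos hr)).ne'
  rw [cfc_inv _ a hpos (ha := ha.isSelfAdjoint),
    cfc_const_add s _ a (ha := ha.isSelfAdjoint), cfc_id' ℝ a ha.isSelfAdjoint, shiftedInv]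

theorem norm_shiftedInv_le (hc : 0 < c) (hca : algebraMap ℝ 𝒜 c ≤ a) (hs : 0 ≤ s) :
    ‖shiftedInv a s‖ ≤ (s + c)⁻¹ := by
  have ha := isStrictlyPositive_of_algebraMap_le hc hca
  rw [shiftedInv_eq_cfc ha hs]
  refine norm_cfc_le (by positivity) fun r hr => ?_
  have hcr : c ≤ r := (algebraMap_le_iff_le_spectrum ha.isSelfAdjoint).1 hca r hr
  rw [Real.norm_of_nonneg (by have := hc.trans_le hcr; positivity)]
  gcongr

theorem norm_shiftedInv_mul_mul_le (x : 𝒜) (hc : 0 < c) (hca : algebraMap ℝ 𝒜 c ≤ a)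
    (hs : 0 ≤ s) : ‖shiftedInv a s * x * shiftedInv a s‖ ≤ ‖x‖ * (s + c)⁻¹ ^ 2 := by
  have hR := norm_shiftedInv_le hc hca hs
  calc ‖shiftedInv a s * x * shiftedInv a s‖
      ≤ ‖shiftedInv a s‖ * ‖x‖ * ‖shiftedInv a s‖ := norm_mul₃_le
    _ ≤ (s + c)⁻¹ * ‖x‖ * (s + c)⁻¹ := by gcongr
    _ = ‖x‖ * (s + c)⁻¹ ^ 2 := by ring

theorem integrableOn_shiftedInv_mul_mul (ha : IsStrictlyPositive a) (x : 𝒜) :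
    IntegrableOn (fun s => shiftedInv a s * x * shiftedInv a s) (Ioi 0) := by
  obtain ⟨c, hc, hca⟩ := exists_pos_algebraMap_le_of_isStrictlyPositive ha
  have hR : ContinuousOn (shiftedInv a) (Ioi 0) := fun s hs =>
    (continuousAt_shiftedInv (isUnit_algebraMap_add ha (le_of_lt hs))).continuousWithinAt
  exact ((integrableOn_Ioi_inv_add_sq hc).const_mul ‖x‖).mono'
    (((hR.mul continuousOn_const).mul hR).aestronglyMeasurable measurableSet_Ioi)
    (ae_restrict_of_forall_mem measurableSet_Ioi fun s hs =>
      norm_shiftedInv_mul_mul_le x hc hca (le_of_lt hs))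

theorem algebraMap_inv_sub_shiftedInv_eq_cfc (ha : IsStrictlyPositive a) (hs : 0 ≤ s) :
    algebraMap ℝ 𝒜 (s + 1)⁻¹ - shiftedInv a s = cfc (fun r : ℝ => (s + 1)⁻¹ - (s + r)⁻¹) a := by
  have hcont : ContinuousOn (fun r : ℝ => (s + r)⁻¹) (spectrum ℝ a) :=
    ContinuousOn.inv₀ (by fun_prop) fun r hr =>
      (add_pos_of_nonneg_of_pos hs (ha.spectrum_pos hr)).ne'
  rw [cfc_sub (fun _ => (s + 1)⁻¹) _ a continuousOn_const hcont,
    cfc_const _ a ha.isSelfAdjoint, shiftedInv_eq_cfc ha hs]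

theorem integrableOn_algebraMap_inv_sub_shiftedInv (ha : IsStrictlyPositive a) :
    IntegrableOn (fun s => algebraMap ℝ 𝒜 (s + 1)⁻¹ - shiftedInv a s) (Ioi 0) := by
  have hpos (r : ℝ) (hr : r ∈ spectrum ℝ a) : 0 < r := ha.spectrum_pos hr
  obtain ⟨g, hg, hbound⟩ :=
    exists_abs_inv_add_one_sub_inv_add_le (ContinuousFunctionalCalculus.isCompact_spectrum a) hpos
  refine (integrableOn_cfc measurableSet_Ioi _ g a (continuousOn_inv_add_one_sub_inv_add hpos)
    (ae_restrict_of_forall_mem measurableSet_Ioi hbound) hg.2 ha.isSelfAdjoint).congr_fun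
    (fun s hs => ?_) measurableSet_Ioi
  exact (algebraMap_inv_sub_shiftedInv_eq_cfc ha (le_of_lt hs)).symm

theorem log_eq_integral (ha : IsStrictlyPositive a) :
    CFC.log a = ∫ s in Ioi (0 : ℝ), (algebraMap ℝ 𝒜 (s + 1)⁻¹ - shiftedInv a s) := by
  have hpos (r : ℝ) (hr : r ∈ spectrum ℝ a) : 0 < r := ha.spectrum_pos hr
  obtain ⟨g, hg, hbound⟩ :=
    exists_abs_inv_add_one_sub_inv_add_le (ContinuousFunctionalCalculus.isCompact_spectrum a) hpos
  calc CFC.log a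
      = cfc (fun r : ℝ => ∫ s in Ioi (0 : ℝ), ((s + 1)⁻¹ - (s + r)⁻¹)) a :=
        cfc_congr fun r hr => by simp [integral_Ioi_inv_add_sub_inv_add one_pos (hpos r hr)]
    _ = ∫ s in Ioi (0 : ℝ), cfc (fun r : ℝ => (s + 1)⁻¹ - (s + r)⁻¹) a :=
        cfc_setIntegral measurableSet_Ioi _ g a (continuousOn_inv_add_one_sub_inv_add hpos)
          (ae_restrict_of_forall_mem measurableSet_Ioi hbound) hg.2 ha.isSelfAdjoint
    _ = ∫ s in Ioi (0 : ℝ), (algebraMap ℝ 𝒜 (s + 1)⁻¹ - shiftedInv a s) :=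
        setIntegral_congr_fun measurableSet_Ioi fun _ hs =>
          (algebraMap_inv_sub_shiftedInv_eq_cfc ha (le_of_lt hs)).symm

theorem eventually_algebraMap_le_add_smul {c' : ℝ} (hx : IsSelfAdjoint x) (hc : c' < c)
    (hca : algebraMap ℝ 𝒜 c ≤ a) : ∀ᶠ t in 𝓝 (0 : ℝ), algebraMap ℝ 𝒜 c' ≤ a + t • x := by
  have hsmall : ∀ᶠ t in 𝓝 (0 : ℝ), |t| * ‖x‖ < c - c' :=
    (Continuous.tendsto' (by fun_prop) 0 0 (by simp)).eventually_lt_const (sub_pos.2 hc)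
  filter_upwards [hsmall] with t ht
  have htx : -algebraMap ℝ 𝒜 (c - c') ≤ t • x :=
    calc -algebraMap ℝ 𝒜 (c - c') ≤ -algebraMap ℝ 𝒜 ‖t • x‖ := by
          rw [norm_smul, Real.norm_eq_abs]
          exact neg_le_neg (algebraMap_mono 𝒜 ht.le)
      _ ≤ t • x := ((IsSelfAdjoint.all t).smul hx).neg_algebraMap_norm_le_self
  calc algebraMap ℝ 𝒜 c' = algebraMap ℝ 𝒜 c + -algebraMap ℝ 𝒜 (c - c') := by
        rw [map_sub]
        abel
    _ ≤ a + t • x := add_le_add hca htx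

theorem eventually_isStrictlyPositive_add_smul (ha : IsStrictlyPositive a)
    (hx : IsSelfAdjoint x) : ∀ᶠ t in 𝓝 (0 : ℝ), IsStrictlyPositive (a + t • x) := by
  obtain ⟨c, hc, hca⟩ := exists_pos_algebraMap_le_of_isStrictlyPositive ha
  filter_upwards [eventually_algebraMap_le_add_smul hx (half_lt_self hc) hca] with t ht
  exact isStrictlyPositive_of_algebraMap_le (half_pos hc) ht

theorem hasDerivAt_log_add_smul (ha : IsStrictlyPositive a) (hx : IsSelfAdjoint x) :
    HasDerivAt (fun t : ℝ => CFC.log (a + t • x)) (bkmMap a x) 0 := by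
  obtain ⟨c, hc, hca⟩ := exists_pos_algebraMap_le_of_isStrictlyPositive ha
  have hlower := eventually_algebraMap_le_add_smul hx (half_lt_self hc) hca
  have hpos {t : ℝ} (ht : algebraMap ℝ 𝒜 (c / 2) ≤ a + t • x) : IsStrictlyPositive (a + t • x) :=
    isStrictlyPositive_of_algebraMap_le (half_pos hc) ht
  have hlog : ∀ᶠ t in 𝓝 (0 : ℝ), CFC.log (a + t • x) =
      ∫ s in Ioi (0 : ℝ), (algebraMap ℝ 𝒜 (s + 1)⁻¹ - shiftedInv (a + t • x) s) :=
    hlower.mono fun t ht => log_eq_integral (hpos ht)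
  have hderiv := (hasDerivAt_integral_of_dominated_loc_of_deriv_le
    (μ := volume.restrict (Ioi 0))
    (F := fun t s => algebraMap ℝ 𝒜 (s + 1)⁻¹ - shiftedInv (a + t • x) s)
    (F' := fun t s => shiftedInv (a + t • x) s * x * shiftedInv (a + t • x) s)
    (bound := fun s => ‖x‖ * (s + c / 2)⁻¹ ^ 2) hlower
    (hlower.mono fun t ht => (integrableOn_algebraMap_inv_sub_shiftedInv (hpos ht)).1)
    (integrableOn_algebraMap_inv_sub_shiftedInv (hpos hlower.self_of_nhds))
    (integrableOn_shiftedInv_mul_mul (hpos hlower.self_of_nhds) x).1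
    (ae_restrict_of_forall_mem measurableSet_Ioi fun s hs t ht =>
      norm_shiftedInv_mul_mul_le x (half_pos hc) ht (le_of_lt hs))
    ((integrableOn_Ioi_inv_add_sq (half_pos hc)).const_mul ‖x‖)
    (ae_restrict_of_forall_mem measurableSet_Ioi fun s hs t ht => by
      simpa using (hasDerivAt_shiftedInv_add_smul
        (isUnit_algebraMap_add (hpos ht) (le_of_lt hs))).const_sub (algebraMap ℝ 𝒜 (s + 1)⁻¹))).2
  simpa [bkmMap] using hderiv.congr_of_eventuallyEq hlog

-- The derivative of `log` at `a` in the direction `a` is read off from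
-- `log ((1 + t) a) = log (1 + t) + log a`.
theorem bkmMap_self (ha : IsStrictlyPositive a) : bkmMap a a = 1 := by
  have hscale : HasDerivAt (fun t : ℝ => algebraMap ℝ 𝒜 (Real.log (1 + t)) + CFC.log a) 1 0 := by
    have hlog : HasDerivAt (fun t : ℝ => Real.log (1 + t)) 1 0 := by
      simpa using ((hasDerivAt_id (0 : ℝ)).const_add 1).log (by simp)
    simpa [Algebra.algebraMap_eq_smul_one] using
      (hlog.smul_const (1 : 𝒜)).add_const (CFC.log a)
  refine (hasDerivAt_log_add_smul ha ha.isSelfAdjoint).unique (hscale.congr_of_eventuallyEq ?_)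
  filter_upwards [lt_mem_nhds (show (-1 : ℝ) < 0 by norm_num)] with t ht
  rw [← CFC.log_smul' a (by linarith) ha, add_smul, one_smul]

section Trace

variable {E : Type*} [NormedAddCommGroup E] [NormedSpace ℝ E] [CompleteSpace E] {T : 𝒜 →L[ℝ] E}
  {y b : 𝒜}

theorem trace_mul_bkmMap (hT : ∀ u v : 𝒜, T (u * v) = T (v * u)) (ha : IsStrictlyPositive a)
    (x y : 𝒜) : T (y * bkmMap a x) =
      ∫ s in Ioi (0 : ℝ), T (shiftedInv a s * x * shiftedInv a s * y) := by
  have h := (T.comp ((ContinuousLinearMap.mul ℝ 𝒜).flip y)).integral_comp_comm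
    (integrableOn_shiftedInv_mul_mul ha x)
  simpa [bkmMap, hT y] using h.symm

theorem trace_mul_bkmMap_comm (hT : ∀ u v : 𝒜, T (u * v) = T (v * u))
    (ha : IsStrictlyPositive a) (x y : 𝒜) : T (y * bkmMap a x) = T (x * bkmMap a y) := by
  rw [trace_mul_bkmMap hT ha, trace_mul_bkmMap hT ha]
  congr 1 with s
  rw [mul_assoc, hT, ← mul_assoc, hT, mul_assoc]

theorem trace_mul_bkmMap_self (hT : ∀ u v : 𝒜, T (u * v) = T (v * u))
    (ha : IsStrictlyPositive a) (x : 𝒜) : T (a * bkmMap a x) = T x := by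
  rw [trace_mul_bkmMap_comm hT ha, bkmMap_self ha, mul_one]

theorem hasDerivAt_traceRelEnt_add_smul (hT : ∀ u v : 𝒜, T (u * v) = T (v * u)) (a : 𝒜)
    (hb : IsStrictlyPositive b) (hy : IsSelfAdjoint y) :
    HasDerivAt (fun t : ℝ => traceRelEnt T a (b + t • y))
      (T (y * (CFC.log b - CFC.log a)) + T y) 0 := by
  have hline : HasDerivAt (fun t : ℝ => b + t • y) y 0 := by
    simpa using ((hasDerivAt_id (0 : ℝ)).smul_const y).const_add b
  have hmul := hline.mul ((hasDerivAt_log_add_smul hb hy).sub_const (CFC.log a))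
  refine (T.hasFDerivAt.comp_hasDerivAt 0 hmul).congr_deriv ?_
  simp [trace_mul_bkmMap_self hT hb]

theorem relEnt_hessian_eq_bkm_general (hT : ∀ u v : 𝒜, T (u * v) = T (v * u))
    (ha : IsStrictlyPositive a) (hx : IsSelfAdjoint x) (hy : IsSelfAdjoint y) :
    IntegrableOn (fun s => T (shiftedInv a s * x * shiftedInv a s * y)) (Ioi 0) ∧
    ∃ φ : ℝ → E,
      (∀ᶠ ε in 𝓝 (0 : ℝ),
        HasDerivAt (fun η : ℝ => traceRelEnt T a (a + ε • x + η • y)) (φ ε) 0) ∧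
      HasDerivAt φ (∫ s in Ioi (0 : ℝ), T (shiftedInv a s * x * shiftedInv a s * y)) 0 := by
  refine ⟨(T.comp ((ContinuousLinearMap.mul ℝ 𝒜).flip y)).integrable_comp
    (integrableOn_shiftedInv_mul_mul ha x),
    fun ε => T (y * (CFC.log (a + ε • x) - CFC.log a)) + T y, ?_, ?_⟩
  · filter_upwards [eventually_isStrictlyPositive_add_smul ha hx] with ε hε
    exact hasDerivAt_traceRelEnt_add_smul hT a hε hy
  · rw [← trace_mul_bkmMap hT ha]
    have hlog := ((hasDerivAt_log_add_smul ha hx).sub_const (CFC.log a)).const_mul y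
    exact (T.hasFDerivAt.comp_hasDerivAt 0 hlog).add_const (T y)

end Trace

end CStarAlgebra

section Matrix

open scoped MatrixOrder Matrix.Norms.L2Operator

theorem mlog_eq_log {n : ℕ} (ρ : Matrix (Fin n) (Fin n) ℂ) : mlog ρ = CFC.log ρ := by
  by_cases h : ρ.IsHermitian
  · rw [CFC.log, h.cfc_eq]
    simp [mlog, h, Matrix.IsHermitian.cfc, Unitary.conjStarAlgAut_apply,
      Matrix.star_eq_conjTranspose, Function.comp_def]
  · rw [mlog, dif_neg h, CFC.log,
      cfc_apply_of_not_predicate (p := IsSelfAdjoint) (f := Real.log) ρ h]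

/-- The functional `M ↦ Re Tr M`, real-linear so that it can be differentiated along real
parameters. -/
noncomputable def reTrace (n : Type*) [Fintype n] : Matrix n n ℂ →L[ℝ] ℝ :=
  LinearMap.toContinuousLinearMap (Complex.reLm ∘ₗ Matrix.traceLinearMap n ℝ ℂ)

theorem reTrace_apply {n : Type*} [Fintype n] (M : Matrix n n ℂ) :
    reTrace n M = M.trace.re := rfl

theorem vonNeumannRelEnt_eq_traceRelEnt {n : ℕ} (σ τ : Matrix (Fin n) (Fin n) ℂ) :
    vonNeumannRelEnt σ τ = traceRelEnt (reTrace (Fin n)) σ τ := by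
  rw [vonNeumannRelEnt, traceRelEnt, reTrace_apply, mlog_eq_log, mlog_eq_log]

theorem shiftedInv_eq_smul_one_add_inv {n : Type*} [Fintype n] [DecidableEq n]
    (σ : Matrix n n ℂ) (s : ℝ) : shiftedInv σ s = ((s : ℂ) • (1 : Matrix n n ℂ) + σ)⁻¹ := by
  rw [shiftedInv, Matrix.nonsing_inv_eq_ringInverse, Algebra.algebraMap_eq_smul_one,
    Complex.coe_smul]

end Matrix

/-- **The Hessian of the von Neumann relative entropy at its minimum is the BKM-tilde
pairing.** For a positive definite state `σ` of trace one and traceless Hermitian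
directions `A, B`, the mixed second derivative `∂_ε ∂_η |₀ H_σ(σ + εA + ηB)` exists and
equals `∫₀^∞ Re Tr[(s·I + σ)⁻¹ A (s·I + σ)⁻¹ B] ds`, an absolutely convergent improper
integral. -/
theorem relEnt_hessian_eq_bkm
    (n : ℕ) (hn : 1 ≤ n)
    (σ : Matrix (Fin n) (Fin n) ℂ) (hσ : σ.PosDef) (hσtr : σ.trace = 1)
    (A B : Matrix (Fin n) (Fin n) ℂ) (hA : A.IsHermitian) (hB : B.IsHermitian)
    (hAtr : A.trace = 0) (hBtr : B.trace = 0) :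
    MeasureTheory.IntegrableOn
      (fun s : ℝ =>
        ((((s : ℂ) • (1 : Matrix (Fin n) (Fin n) ℂ) + σ)⁻¹ * A * ((s : ℂ) • 1 + σ)⁻¹ * B).trace).re)
      (Set.Ioi 0) ∧
    ∃ φ : ℝ → ℝ,
      (∀ᶠ ε in 𝓝 (0:ℝ),
        HasDerivAt (fun η : ℝ => vonNeumannRelEnt σ (σ + ε • A + η • B)) (φ ε) 0) ∧
      HasDerivAt φ
        (∫ s in Set.Ioi (0:ℝ),
          ((((s : ℂ) • (1 : Matrix (Fin n) (Fin n) ℂ) + σ)⁻¹ * A * ((s : ℂ) • 1 + σ)⁻¹ * B).trace).re)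
        0 := by
  open scoped MatrixOrder Matrix.Norms.L2Operator in
  simpa only [reTrace_apply, vonNeumannRelEnt_eq_traceRelEnt, shiftedInv_eq_smul_one_add_inv] using
    relEnt_hessian_eq_bkm_general (T := reTrace (Fin n))
      (fun u v => by simp [reTrace_apply, Matrix.trace_mul_comm u])
      hσ.isStrictlyPositive hA hB
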